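/- Let n and k be positive integers with 2k ≤ n. Then the number of words w : Fin n → Fin 5 whose inversion number inv(w) = |{(i,j) : i < j and w(j) < w(i)}| is at most k² is at most 16·k⁴·((e·n)/k)^{8k}, where e = exp(1) and the cardinality is cast to a real number. -/

import Mathlib

/-- The inversion number of a word `w : Fin n → A` over a linearly ordered
alphabet `A`: the number of pairs `(i, j)` with `i < j` and `w j < w i`. -/
def invNum {n : ℕ} {A : Type*} [LinearOrder A] (w : Fin n → A) : ℕ :=
  (Finset.univ.filter (fun p : Fin n × Fin n => p.1 < p.2 ∧ w p.2 < w p.1)).card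

/-!
A word over `m + 1` letters is recovered from its `m` binary threshold words, none of which has
more inversions than the word itself, so it suffices to count binary words.

Let `w` be a binary word with `z ≥ 1` zeros, and cut it after its first `z - 1` positions. If `d`
ones precede the cut, then `d + 1` zeros follow it, and all pairs formed by one of each are
inversions. Hence `d (d + 1) ≤ k²`, so `d < k`, and `w` differs from the sorted word `0 ⋯ 0 1 ⋯ 1`
with the same cut in `2 d + 1 < 2 k` positions. (Cutting after `z` positions would only give
`d² ≤ k²`, and the resulting count would be too large by a factor of order `n`.) The number of sets
of fewer than `2 k` positions is bounded by weighting a set `S` with `(k / n) ^ |S|`.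
-/

open Finset

section Inversions

variable {n : ℕ} {A B : Type*} [LinearOrder A] [LinearOrder B]

lemma card_mul_card_le_invNum {w : Fin n → A} {s t : Finset (Fin n)}
    (h : ∀ i ∈ s, ∀ j ∈ t, i < j ∧ w j < w i) : #s * #t ≤ invNum w := by
  rw [← card_product]
  refine card_le_card fun p hp ↦ ?_
  rw [mem_product] at hp
  exact mem_filter.mpr ⟨mem_univ p, h _ hp.1 _ hp.2⟩

lemma invNum_comp_le {f : A → B} (hf : Monotone f) (w : Fin n → A) :
    invNum (f ∘ w) ≤ invNum w :=
  card_le_card <| monotone_filter_right _ fun _ _ hp ↦ ⟨hp.1, hf.reflect_lt hp.2⟩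

end Inversions

section Thresholds

variable {n : ℕ} {A : Type*} [LinearOrder A]

/-- The binary word marking the positions at which `w` exceeds the letter `c`. -/
def thresholdWord (w : Fin n → A) (c : A) : Fin n → Bool := fun i ↦ decide (c < w i)

lemma invNum_thresholdWord_le (w : Fin n → A) (c : A) : invNum (thresholdWord w c) ≤ invNum w :=
  invNum_comp_le (f := fun a ↦ decide (c < a))
    (fun _ _ hab ↦ Bool.le_iff_imp.mpr fun h ↦
      decide_eq_true ((of_decide_eq_true h).trans_le hab)) w

lemma fin_le_of_forall_castSucc_lt {m : ℕ} {a b : Fin (m + 1)}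
    (h : ∀ c : Fin m, c.castSucc < a → c.castSucc < b) : a ≤ b := by
  by_contra! hba
  obtain ⟨c, rfl⟩ := Fin.exists_castSucc_eq.mpr (hba.trans_le a.le_last).ne
  exact (h c hba).false

lemma thresholdWord_castSucc_injective {m : ℕ} :
    Function.Injective fun (w : Fin n → Fin (m + 1)) (c : Fin m) ↦
      thresholdWord w c.castSucc := by
  intro v w hvw
  funext i
  have h (c : Fin m) : c.castSucc < v i ↔ c.castSucc < w i :=
    decide_eq_decide.mp (congrFun (congrFun hvw c) i)
  exact le_antisymm (fin_le_of_forall_castSucc_lt fun c ↦ (h c).mp)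
    (fin_le_of_forall_castSucc_lt fun c ↦ (h c).mpr)

lemma card_invNum_le_le_card_bool_pow (m r : ℕ) :
    #{w : Fin n → Fin (m + 1) | invNum w ≤ r} ≤ #{w : Fin n → Bool | invNum w ≤ r} ^ m := by
  rw [← Fintype.card_piFinset_const]
  refine card_le_card_of_injOn _ (fun w hw ↦ ?_) thresholdWord_castSucc_injective.injOn
  simp only [mem_coe, Fintype.mem_piFinset, mem_filter_univ] at hw ⊢
  exact fun c ↦ (invNum_thresholdWord_le w _).trans hw

end Thresholds

section Cuts

variable {n : ℕ}

/-- The ones of a binary word among its first `t` positions. -/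
def onesBefore (t : ℕ) (w : Fin n → Bool) : Finset (Fin n) := {i | i < t ∧ w i = true}

/-- The zeros of a binary word after its first `t` positions. -/
def zerosFrom (t : ℕ) (w : Fin n → Bool) : Finset (Fin n) := {i | t ≤ i ∧ w i = false}

/-- The positions in which a binary word differs from the sorted word whose zeros are its first `t`
letters. -/
def misplaced (t : ℕ) (w : Fin n → Bool) : Finset (Fin n) := onesBefore t w ∪ zerosFrom t w

lemma mem_misplaced {t : ℕ} {w : Fin n → Bool} {i : Fin n} :
    i ∈ misplaced t w ↔ w i = decide ((i : ℕ) < t) := by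
  simp only [misplaced, onesBefore, zerosFrom, mem_union, mem_filter_univ]
  by_cases hi : (i : ℕ) < t <;> simp [hi, Nat.le_of_not_lt]

lemma misplaced_injective (t : ℕ) :
    Function.Injective (misplaced t : (Fin n → Bool) → Finset (Fin n)) := by
  intro v w hvw
  funext i
  have h := Finset.ext_iff.mp hvw i
  rw [mem_misplaced, mem_misplaced] at h
  have bool_eq : ∀ a b c : Bool, (a = c ↔ b = c) → a = b := by decide
  exact bool_eq _ _ _ h

lemma card_onesBefore_mul_card_zerosFrom_le_invNum (t : ℕ) (w : Fin n → Bool) :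
    #(onesBefore t w) * #(zerosFrom t w) ≤ invNum w := by
  refine card_mul_card_le_invNum fun i hi j hj ↦ ?_
  obtain ⟨hit, hwi⟩ := mem_filter_univ i |>.mp hi
  obtain ⟨htj, hwj⟩ := mem_filter_univ j |>.mp hj
  exact ⟨Fin.lt_def.mpr (hit.trans_le htj), by simp [hwi, hwj]⟩

lemma card_onesBefore_add_card_zeros {t : ℕ} (ht : t ≤ n) (w : Fin n → Bool) :
    #(onesBefore t w) + #{i | w i = false} = t + #(zerosFrom t w) := by
  have hzeros :=
    card_filter_add_card_filter_not (s := {i | w i = false}) fun i : Fin n ↦ (i : ℕ) < t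
  have hfirst := card_filter_add_card_filter_not (s := {i : Fin n | (i : ℕ) < t}) (w · = true)
  have hcard : #{i : Fin n | (i : ℕ) < t} = t := by
    rw [Fin.card_filter_val_lt, min_eq_right ht]
  simp only [filter_filter, not_lt, Bool.not_eq_true, and_comm (a := w _ = false)]
    at hzeros hfirst
  rw [onesBefore, zerosFrom]
  omega

lemma exists_card_misplaced_lt {k : ℕ} (hk : 0 < k) {w : Fin n → Bool} (hw : invNum w ≤ k ^ 2) :
    ∃ t ≤ n, #(misplaced t w) < 2 * k := by
  set z := #{i | w i = false}
  have hzn : z ≤ n := (card_le_univ _).trans_eq (Fintype.card_fin n)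
  have htn : z - 1 ≤ n := (Nat.sub_le z 1).trans hzn
  refine ⟨z - 1, htn, (card_union_le _ _).trans_lt ?_⟩
  have hbalance := card_onesBefore_add_card_zeros htn w
  have hprod := (card_onesBefore_mul_card_zerosFrom_le_invNum (z - 1) w).trans hw
  have hzeros : #(zerosFrom (z - 1) w) ≤ z :=
    card_le_card (monotone_filter_right _ fun _ _ h ↦ h.2)
  -- If `z = 0`, then `z - 1 = 0` by truncation, and `w` is already sorted.
  obtain hz0 | hz0 := z.eq_zero_or_pos
  · omega
  · have hsucc : #(zerosFrom (z - 1) w) = #(onesBefore (z - 1) w) + 1 := by omega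
    have hlt : #(onesBefore (z - 1) w) < k := by rw [hsucc] at hprod; nlinarith
    omega

lemma card_bool_invNum_le_sq_le {k : ℕ} (hk : 0 < k) :
    #{w : Fin n → Bool | invNum w ≤ k ^ 2} ≤ (n + 1) * #{s : Finset (Fin n) | #s < 2 * k} := by
  have hcover : ({w : Fin n → Bool | invNum w ≤ k ^ 2} : Finset (Fin n → Bool)) ⊆
      (range (n + 1)).biUnion fun t ↦ {w | #(misplaced t w) < 2 * k} := by
    intro w hw
    obtain ⟨t, htn, ht⟩ := exists_card_misplaced_lt hk (mem_filter_univ w |>.mp hw)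
    exact mem_biUnion.mpr ⟨t, mem_range_succ_iff.mpr htn, mem_filter_univ w |>.mpr ht⟩
  have hcut (t : ℕ) : #{w : Fin n → Bool | #(misplaced t w) < 2 * k} ≤
      #{s : Finset (Fin n) | #s < 2 * k} :=
    card_le_card_of_injOn (misplaced t) (fun w hw ↦ by simpa using hw)
      (misplaced_injective t).injOn
  simpa only [card_range] using
    (card_le_card hcover).trans (card_biUnion_le_card_mul _ _ _ fun t _ ↦ hcut t)

end Cuts

section Estimates

lemma card_finset_card_lt_mul_pow_le {α : Type*} [Fintype α] {x : ℝ} (hx0 : 0 ≤ x) (hx1 : x ≤ 1)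
    (m : ℕ) : #{s : Finset α | #s < m} * x ^ m ≤ x * (1 + x) ^ Fintype.card α := by
  calc #{s : Finset α | #s < m} * x ^ m
      = ∑ s : Finset α with #s < m, x ^ m := by rw [sum_const, nsmul_eq_mul]
    _ ≤ ∑ s : Finset α with #s < m, x ^ (#s + 1) :=
        sum_le_sum fun s hs ↦ pow_le_pow_of_le_one hx0 hx1 (mem_filter_univ s |>.mp hs)
    _ ≤ ∑ s : Finset α, x ^ (#s + 1) :=
        sum_le_univ_sum_of_nonneg fun s ↦ pow_nonneg hx0 _
    _ = x * (1 + x) ^ Fintype.card α := by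
        simp [pow_succ', ← mul_sum, add_comm 1 x, ← Fintype.sum_pow_mul_eq_add_pow]

lemma card_finset_card_lt_two_mul_le {n k : ℕ} (hk : 0 < k) (hkn : k ≤ n) :
    (#{s : Finset (Fin n) | #s < 2 * k} : ℝ) ≤
      k / n * (Real.exp 1 * n / k) ^ (2 * k) := by
  have hn : 0 < n := hk.trans_le hkn
  have hx1 : (k / n : ℝ) ≤ 1 := div_le_one_of_le₀ (mod_cast hkn) n.cast_nonneg
  have hexp : (1 + k / n : ℝ) ^ n ≤ Real.exp 1 ^ (2 * k) :=
    calc (1 + k / n : ℝ) ^ n ≤ Real.exp (k / n) ^ n := by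
          gcongr
          rw [add_comm]
          exact Real.add_one_le_exp _
      _ = Real.exp 1 ^ k := by
          rw [← Real.exp_nat_mul, ← Real.exp_nat_mul, mul_one, mul_div_cancel₀ _ (by positivity)]
      _ ≤ Real.exp 1 ^ (2 * k) :=
          pow_le_pow_right₀ (Real.one_le_exp zero_le_one) (Nat.le_mul_of_pos_left k two_pos)
  have hweight := card_finset_card_lt_mul_pow_le (α := Fin n) (by positivity) hx1 (2 * k)
  rw [Fintype.card_fin, ← le_div_iff₀ (by positivity)] at hweight
  calc (#{s : Finset (Fin n) | #s < 2 * k} : ℝ)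
      ≤ k / n * (1 + k / n) ^ n / (k / n) ^ (2 * k) := hweight
    _ ≤ k / n * Real.exp 1 ^ (2 * k) / (k / n) ^ (2 * k) := by gcongr
    _ = k / n * (Real.exp 1 * n / k) ^ (2 * k) := by
        rw [mul_div_assoc, ← div_pow, div_div_eq_mul_div]

lemma card_bool_invNum_le_sq_exp_bound {n k : ℕ} (hk : 0 < k) (hkn : k ≤ n) :
    (#{w : Fin n → Bool | invNum w ≤ k ^ 2} : ℝ) ≤
      2 * k * (Real.exp 1 * n / k) ^ (2 * k) := by
  have hn : (1 : ℝ) ≤ n := mod_cast hk.trans_le hkn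
  calc (#{w : Fin n → Bool | invNum w ≤ k ^ 2} : ℝ)
      ≤ (n + 1) * #{s : Finset (Fin n) | #s < 2 * k} := mod_cast card_bool_invNum_le_sq_le hk
    _ ≤ (n + n) * (k / n * (Real.exp 1 * n / k) ^ (2 * k)) := by
        gcongr
        exact card_finset_card_lt_two_mul_le hk hkn
    _ = 2 * k * (Real.exp 1 * n / k) ^ (2 * k) := by
        rw [← mul_assoc, ← two_mul, mul_assoc 2,
          mul_div_cancel₀ _ (zero_lt_one.trans_le hn).ne']

end Estimates

theorem count_low_inversion_words_five_letters_exp_bound_general (m : ℕ) {n k : ℕ} (hk : 0 < k)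
    (hkn : k ≤ n) :
    (#{w : Fin n → Fin (m + 1) | invNum w ≤ k ^ 2} : ℝ) ≤
      (2 * k * (Real.exp 1 * n / k) ^ (2 * k)) ^ m :=
  calc (#{w : Fin n → Fin (m + 1) | invNum w ≤ k ^ 2} : ℝ)
      ≤ (#{w : Fin n → Bool | invNum w ≤ k ^ 2} : ℝ) ^ m :=
        mod_cast card_invNum_le_le_card_bool_pow m (k ^ 2)
    _ ≤ (2 * k * (Real.exp 1 * n / k) ^ (2 * k)) ^ m := by
        gcongr
        exact card_bool_invNum_le_sq_exp_bound hk hkn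

theorem count_low_inversion_words_five_letters_exp_bound (n k : ℕ) (hn : 0 < n) (hk : 0 < k)
    (hkn : 2 * k ≤ n) :
    ((Finset.univ.filter (fun w : Fin n → Fin 5 => invNum w ≤ k ^ 2)).card : ℝ) ≤
      16 * (k : ℝ) ^ 4 * ((Real.exp 1 * n) / k) ^ (8 * k) :=
  (count_low_inversion_words_five_letters_exp_bound_general 4 hk (by omega)).trans_eq (by ring)
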